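/- For all words x, y, z, w, the polynomial (xy choose w)_q · (yz choose w)_q − (xyz choose w)_q · (y choose w)_q has non-negative integer coefficients. -/

import Mathlib

open Polynomial

/-- q-binomial on reversed words: first list = word with rightmost letter first,
matching the recursion (ua choose vb)_q = (u choose vb)_q * q^{|vb|} + [a=b](u choose v)_q. -/
noncomputable def qBaux {α : Type*} [DecidableEq α] : List α → List α → Polynomial ℕ
  | _, [] => 1
  | [], _ :: _ => 0
  | a :: u, b :: v =>
      qBaux u (b :: v) * X ^ (v.length + 1) + if a = b then qBaux u v else 0

/-- q-binomial coefficient of words `u`, `v` given in natural reading order. -/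
noncomputable def qB {α : Type*} [DecidableEq α] (u v : List α) : Polynomial ℕ :=
  qBaux u.reverse v.reverse

/-- View a polynomial with natural coefficients as a polynomial with integer coefficients. -/
noncomputable def toZnat : Polynomial ℕ →+* Polynomial ℤ :=
  Polynomial.mapRingHom (Nat.castRingHom ℤ)

/-- Generating polynomial of the ways to read off the factor of `w` between positions `i` and `j`
as a subword of the word whose reversal is the list argument. Skipping a letter while at position
`s` of `w` has weight `X ^ s`. -/
noncomputable def subwordTransfer {α : Type*} [DecidableEq α] (w : List α) :
    List α → ℕ → ℕ → ℤ[X]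
  | [], i, j => if i = j then 1 else 0
  | _ :: u, i, 0 => subwordTransfer w u i 0
  | a :: u, i, j + 1 =>
      subwordTransfer w u i (j + 1) * X ^ (j + 1) +
        (if w[j]? = some a then 1 else 0) * subwordTransfer w u i j

section

variable {α : Type*} [DecidableEq α] (w : List α)

theorem coeff_nonneg_of_mem_rangeS_toZnat {p : ℤ[X]} (hp : p ∈ toZnat.rangeS) (m : ℕ) :
    0 ≤ p.coeff m := by
  obtain ⟨r, rfl⟩ := hp
  simp [toZnat]

theorem X_mem_rangeS_toZnat : (X : ℤ[X]) ∈ toZnat.rangeS :=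
  ⟨X, by simp [toZnat]⟩

theorem ite_mem_rangeS_toZnat (p : Prop) [Decidable p] :
    (if p then 1 else 0 : ℤ[X]) ∈ toZnat.rangeS := by
  split_ifs
  · exact one_mem _
  · exact zero_mem _

theorem subwordTransfer_mem_rangeS (u : List α) (i j : ℕ) :
    subwordTransfer w u i j ∈ toZnat.rangeS := by
  induction u generalizing j with
  | nil => exact ite_mem_rangeS_toZnat _
  | cons a u ih =>
    cases j with
    | zero => exact ih 0
    | succ j =>
      exact add_mem (mul_mem (ih _) (pow_mem X_mem_rangeS_toZnat _))
        (mul_mem (ite_mem_rangeS_toZnat _) (ih _))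

theorem toZnat_qBaux_take (u : List α) {j : ℕ} (hj : j ≤ w.length) :
    toZnat (qBaux u (w.take j).reverse) = subwordTransfer w u 0 j := by
  induction u generalizing j with
  | nil =>
    cases j with
    | zero => simp [qBaux, subwordTransfer]
    | succ j =>
      rw [List.take_succ_eq_append_getElem hj, List.reverse_append]
      simp [qBaux, subwordTransfer]
  | cons a u ih =>
    cases j with
    | zero =>
      rw [subwordTransfer, ← ih hj]
      simp [qBaux]
    | succ j =>
      have h := ih hj
      have hj' : j < w.length := hj
      rw [List.take_succ_eq_append_getElem hj, List.reverse_append] at h ⊢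
      simp only [List.reverse_cons, List.reverse_nil, List.nil_append, List.cons_append,
        qBaux, subwordTransfer, map_add, map_mul, map_pow] at h ⊢
      rw [h, ← ih hj'.le]
      have hX : toZnat X = X := by simp [toZnat]
      have hlen : min j w.length = j := min_eq_left hj'.le
      by_cases hab : a = w[j]
      · simp [hX, hlen, hab, hj']
      · simp [hX, hlen, hab, hj', Ne.symm hab]

theorem toZnat_qB (u : List α) :
    toZnat (qB u w) = subwordTransfer w u.reverse 0 w.length := by
  rw [← toZnat_qBaux_take w u.reverse le_rfl, List.take_length, qB]

theorem subwordTransfer_append (u v : List α) (i : ℕ) {j n : ℕ} (hj : j < n) :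
    subwordTransfer w (v ++ u) i j =
      ∑ s ∈ Finset.range n, subwordTransfer w u i s * subwordTransfer w v s j := by
  induction v generalizing j with
  | nil => simp [subwordTransfer, hj]
  | cons a v ih =>
    cases j with
    | zero => simpa [subwordTransfer] using ih hj
    | succ j =>
      simp only [List.cons_append, subwordTransfer]
      rw [ih hj, ih (Nat.lt_of_succ_lt hj), Finset.sum_mul, Finset.mul_sum,
        ← Finset.sum_add_distrib]
      exact Finset.sum_congr rfl fun s _ => by ring

/-- The `2 × 2` minors of the transfer matrix have non-negative coefficients. -/
theorem subwordTransfer_minor_mem_rangeS (u : List α) {i i' j j' : ℕ} (hi : i ≤ i')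
    (hj : j ≤ j') :
    subwordTransfer w u i j * subwordTransfer w u i' j' -
      subwordTransfer w u i j' * subwordTransfer w u i' j ∈ toZnat.rangeS := by
  induction u generalizing j j' with
  | nil =>
    by_cases h : i = j' ∧ i' = j
    · obtain rfl : i = i' := by omega
      obtain rfl : j = j' := by omega
      simp
    · have h0 : subwordTransfer w [] i j' * subwordTransfer w [] i' j = 0 := by
        simp only [subwordTransfer]
        grind
      rw [h0, sub_zero]
      exact mul_mem (subwordTransfer_mem_rangeS ..) (subwordTransfer_mem_rangeS ..)
  | cons a u ih =>
    have hX (n : ℕ) : (X : ℤ[X]) ^ n ∈ toZnat.rangeS := pow_mem X_mem_rangeS_toZnat n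
    rcases j with _ | j <;> rcases j' with _ | j'
    · exact ih le_rfl
    · have hd := ite_mem_rangeS_toZnat (w[j']? = some a)
      simp only [subwordTransfer]
      convert add_mem (mul_mem (hX (j' + 1)) (ih (Nat.zero_le (j' + 1))))
        (mul_mem hd (ih (Nat.zero_le j'))) using 1
      ring
    · omega
    · rcases hj.eq_or_lt with h | h
      · obtain rfl : j = j' := by omega
        rw [sub_eq_zero_of_eq (by ring)]
        exact zero_mem _
      have hd := ite_mem_rangeS_toZnat (w[j]? = some a)
      have hd' := ite_mem_rangeS_toZnat (w[j']? = some a)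
      simp only [subwordTransfer]
      convert add_mem
        (add_mem (mul_mem (mul_mem (hX (j + 1)) (hX (j' + 1))) (ih hj))
          (mul_mem (mul_mem (hX (j + 1)) hd') (ih (show j + 1 ≤ j' by omega))))
        (add_mem (mul_mem (mul_mem hd (hX (j' + 1))) (ih (show j ≤ j' + 1 by omega)))
          (mul_mem (mul_mem hd hd') (ih (show j ≤ j' by omega)))) using 1
      ring

end

/-- q-analogue of the dual Cauchy inequality: (xy choose w)(yz choose w) -
(xyz choose w)(y choose w) has non-negative coefficients. -/
theorem stmt19 {α : Type*} [DecidableEq α] (x y z w : List α) :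
    ∀ m : ℕ,
      0 ≤ (toZnat (qB (x ++ y) w) * toZnat (qB (y ++ z) w)
            - toZnat (qB (x ++ y ++ z) w) * toZnat (qB y w)).coeff m := by
  refine coeff_nonneg_of_mem_rangeS_toZnat ?_
  have hk := Nat.lt_succ_self w.length
  simp only [toZnat_qB, List.reverse_append]
  rw [subwordTransfer_append w _ _ 0 hk, subwordTransfer_append w _ _ 0 hk,
    subwordTransfer_append w _ _ 0 hk, Finset.sum_mul_sum, Finset.sum_comm, Finset.sum_mul,
    ← Finset.sum_sub_distrib]
  refine sum_mem fun t ht => ?_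
  rw [subwordTransfer_append w _ _ 0 (Finset.mem_range.1 ht), Finset.sum_mul, Finset.sum_mul,
    ← Finset.sum_sub_distrib]
  refine sum_mem fun s _ => ?_
  convert mul_mem (mul_mem (subwordTransfer_mem_rangeS w x.reverse 0 s)
    (subwordTransfer_mem_rangeS w z.reverse t w.length))
    (subwordTransfer_minor_mem_rangeS w y.reverse (Nat.zero_le s)
      (Nat.lt_succ_iff.1 (Finset.mem_range.1 ht))) using 1
  ring
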